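/- Let U ⊆ ℝ^m be a connected and simply connected open set. Let P_1,…,P_m : U → ℝ^{m×m} be smooth with each P_k(q) skew-symmetric, and let g_1,…,g_m, h_1,…,h_m : U → ℝ^m be smooth. Assume for all k, l ∈ {1,…,m} on U: (i) ∂_k g_l − ∂_l g_k = P_l g_k − P_k g_l; (ii) ∂_k h_l − ∂_l h_k = P_l h_k − P_k h_l; (iii) ⟨g_k, h_l⟩ = ⟨g_l, h_k⟩; (iv) ∂_k P_l − ∂_l P_k = P_l P_k − P_k P_l + g_k g_lᵀ − g_l g_kᵀ + h_k h_lᵀ − h_l h_kᵀ. Define Ã_k : U → ℝ^{(m+2)×(m+2)} (indices 0, 1,…,m, m+1) as the block matrix with (0,0)-entry 0, first row block −g_kᵀ (columns 1..m), first column block g_k (rows 1..m), middle m×m block P_k, −h_k in rows 1..m of column m+1, h_kᵀ in columns 1..m of row m+1, and all remaining entries 0. Then there exists a smooth F : U → SO(m+2) with ∂_k F = F Ã_k on U for all k. Moreover, f := (column 0 of F) maps U into the unit sphere S^{m+1} ⊂ ℝ^{m+2}, ν := (column m+1 of F) satisfies ⟨ν, ν⟩ = 1, ⟨f, ν⟩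 = 0, ⟨∂_k f, ν⟩ = 0, so (f, ν) is a frontal in S^{m+1}, and ⟨∂_k f, ∂_l f⟩ = ⟨g_k, g_l⟩, ⟨∂_k f, ∂_l ν⟩ = −⟨g_k, h_l⟩, ⟨∂_k ν, ∂_l ν⟩ = ⟨h_k, h_l⟩ on U. -/

import Mathlib

open scoped Matrix

noncomputable section

/-- Partial derivative of a vector-valued map in the `k`-th coordinate direction. -/
def pd {m N : ℕ} (k : Fin m) (f : (Fin m → ℝ) → (Fin N → ℝ)) :
    (Fin m → ℝ) → (Fin N → ℝ) :=
  fun q => fderiv ℝ f q (Pi.single k 1)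

/-- Partial derivative of a scalar function in the `k`-th coordinate direction. -/
def pdr {m : ℕ} (k : Fin m) (g : (Fin m → ℝ) → ℝ) : (Fin m → ℝ) → ℝ :=
  fun q => fderiv ℝ g q (Pi.single k 1)

/-- Entrywise partial derivative of a matrix-valued map. -/
def pdM {m N : ℕ} (k : Fin m) (A : (Fin m → ℝ) → Matrix (Fin N) (Fin N) ℝ) :
    (Fin m → ℝ) → Matrix (Fin N) (Fin N) ℝ :=
  fun q => Matrix.of fun i j => pdr k (fun x => A x i j) q

/-- The block matrix `Ã` of the spherical structure equations (indices `0, 1, …, m, m+1`):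
`(0,0)`-entry `0`, first row `(0, -gᵀ, 0)`, first column `(0, g, 0)ᵀ`, middle `m×m`
block `P`, `-h` in rows `1..m` of the last column, `hᵀ` in columns `1..m` of the last row. -/
def tildeA {m : ℕ} (P : Matrix (Fin m) (Fin m) ℝ) (g h : Fin m → ℝ) :
    Matrix (Fin (m + 2)) (Fin (m + 2)) ℝ :=
  Matrix.of fun i j =>
    if hi0 : (i : ℕ) = 0 then
      (if hj : 1 ≤ (j : ℕ) ∧ (j : ℕ) ≤ m then -g ⟨(j : ℕ) - 1, by omega⟩ else 0)
    else if him : (i : ℕ) = m + 1 then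
      (if hj : 1 ≤ (j : ℕ) ∧ (j : ℕ) ≤ m then h ⟨(j : ℕ) - 1, by omega⟩ else 0)
    else
      if hj0 : (j : ℕ) = 0 then g ⟨(i : ℕ) - 1, by have := i.isLt; omega⟩
      else if hjm : (j : ℕ) = m + 1 then -h ⟨(i : ℕ) - 1, by have := i.isLt; omega⟩
      else P ⟨(i : ℕ) - 1, by have := i.isLt; omega⟩ ⟨(j : ℕ) - 1, by have := j.isLt; omega⟩

/-!
The frame equations say `dF = F · ω` for the one-form `ω = ∑ₖ Ãₖ dxₖ`. The Gauss, Codazzi and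
compatibility equations together are its Maurer–Cartan equation `dω + ω ∧ ω = 0`.

Near a point `p` one integrates `dF = F · ω` along the rays from `p`. To compare neighbouring rays,
perturb the solution along `p + t v` by the factor `1 + t ω(p + t v) h`: the Maurer–Cartan equation
cancels all terms linear in `h` in the defect along `p + t (v + h)`, so by Gronwall the ray
solutions assemble to a map with derivative `F · ω` in every direction. Two invertible solutions
differ by a locally constant left factor, so the local solutions form a covering space, which is
trivial over a simply connected domain. Since `ω` is skew-symmetric, `F Fᵀ` is constant and `F`
stays orthogonal, and all inner products of columns of `F` and their derivatives are entries of
`Ãₖᵀ Ãₗ`, `Ãₖᵀ` or `1`.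
-/

open Set Filter Metric Topology NNReal

section LinearODE

variable {M : Type*} [NormedRing M]

theorem lipschitzWith_mul_right_of_norm_le {b : M} {K : ℝ≥0} (hb : ‖b‖ ≤ K) :
    LipschitzWith K fun a : M => a * b := by
  refine LipschitzWith.of_dist_le_mul fun a a' => ?_
  rw [dist_eq_norm, dist_eq_norm, ← sub_mul, mul_comm (K : ℝ)]
  exact (norm_mul_le _ _).trans (by gcongr)

variable [NormedAlgebra ℝ M]

theorem exists_hasDerivWithinAt_mul_right [CompleteSpace M] (a : M) {w : ℝ → M}
    (hw : ContinuousOn w (Icc 0 1)) (hbound : ∀ t ∈ Icc (0 : ℝ) 1, ‖w t‖ ≤ 1 / 2) :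
    ∃ α : ℝ → M, α 0 = a ∧
      ∀ t ∈ Icc (0 : ℝ) 1, HasDerivWithinAt α (α t * w t) (Icc 0 1) t := by
  have hpicard : IsPicardLindelof (fun t x => x * w t)
      (⟨0, by simp⟩ : Icc (0 : ℝ) 1) a ‖a‖₊ 0 ‖a‖₊ (1 / 2) :=
    { lipschitzOnWith := fun t ht =>
        (lipschitzWith_mul_right_of_norm_le (by simpa using hbound t ht)).lipschitzOnWith
      continuousOn := fun x _ => continuousOn_const.mul hw
      norm_le := fun t ht x hx => by
        have hx' : ‖x‖ ≤ ‖a‖ + ‖a‖ :=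
          (norm_le_norm_add_norm_sub' x a).trans (by gcongr; exact mem_closedBall_iff_norm.1 hx)
        calc ‖x * w t‖ ≤ ‖x‖ * ‖w t‖ := norm_mul_le _ _
          _ ≤ (‖a‖ + ‖a‖) * (1 / 2) := by gcongr; exact hbound t ht
          _ = ‖a‖₊ := by rw [coe_nnnorm]; ring
      mul_max_le := by simp }
  exact hpicard.exists_eq_forall_mem_Icc_hasDerivWithinAt₀

theorem norm_sub_le_of_norm_residual_le {w α β β' : ℝ → M} {ε : ℝ} (hε : 0 ≤ ε)
    (hw : ∀ t ∈ Icc (0 : ℝ) 1, ‖w t‖ ≤ 1)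
    (hα : ∀ t ∈ Icc (0 : ℝ) 1, HasDerivWithinAt α (α t * w t) (Icc 0 1) t)
    (hβ : ∀ t ∈ Icc (0 : ℝ) 1, HasDerivWithinAt β (β' t) (Icc 0 1) t)
    (hresidual : ∀ t ∈ Icc (0 : ℝ) 1, ‖β' t - β t * w t‖ ≤ ε) (h0 : α 0 = β 0) :
    ‖α 1 - β 1‖ ≤ 2 * ε := by
  have hderiv : ∀ t ∈ Icc (0 : ℝ) 1,
      HasDerivWithinAt (α - β) (α t * w t - β' t) (Icc 0 1) t :=
    fun t ht => (hα t ht).sub (hβ t ht)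
  have hgronwall : ‖(α - β) 1‖ ≤ gronwallBound 0 1 ε (1 - 0) := by
    refine norm_le_gronwallBound_of_norm_deriv_right_le
      (fun t ht => (hderiv t ht).continuousWithinAt)
      (fun t ht => (hderiv t (Ico_subset_Icc_self ht)).mono_of_mem_nhdsWithin
        (Icc_mem_nhdsGE_of_mem ht)) (by simp [h0]) (fun t ht => ?_) 1 (by simp)
    have ht' := Ico_subset_Icc_self ht
    calc ‖α t * w t - β' t‖ = ‖(α - β) t * w t - (β' t - β t * w t)‖ := by
          rw [Pi.sub_apply, sub_mul]; abel_nf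
      _ ≤ ‖(α - β) t‖ * ‖w t‖ + ‖β' t - β t * w t‖ :=
          (norm_sub_le _ _).trans (by gcongr; exact norm_mul_le _ _)
      _ ≤ ‖(α - β) t‖ * 1 + ε := by gcongr; exacts [hw t ht', hresidual t ht']
      _ = 1 * ‖(α - β) t‖ + ε := by ring
  have hexp : Real.exp 1 - 1 ≤ 2 := by linarith [Real.exp_one_lt_d9]
  calc ‖α 1 - β 1‖ ≤ ε * (Real.exp 1 - 1) := by
        simpa [gronwallBound_of_K_ne_0 (one_ne_zero' ℝ)] using hgronwall
    _ ≤ 2 * ε := by rw [mul_comm 2]; gcongr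

end LinearODE

section TwoJetBound

variable {E V : Type*} [NormedAddCommGroup E] [NormedSpace ℝ E]
  [NormedAddCommGroup V] [NormedSpace ℝ V]

/-- `f` is differentiable at every point of `s`, with `f` and its derivative bounded by `L` and the
derivative `L`-Lipschitz on `s`: the quantitative form of `C²` regularity (in fact `C^{1,1}`) in
which the frame equation is solved on a ball. -/
structure TwoJetBoundOn (f : E → V) (L : ℝ≥0) (s : Set E) : Prop where
  differentiableAt : ∀ x ∈ s, DifferentiableAt ℝ f x
  norm_le : ∀ x ∈ s, ‖f x‖ ≤ L
  norm_fderiv_le : ∀ x ∈ s, ‖fderiv ℝ f x‖ ≤ L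
  lipschitzOnWith_fderiv : LipschitzOnWith L (fderiv ℝ f) s

namespace TwoJetBoundOn

variable {f : E → V} {L : ℝ≥0} {s : Set E}

theorem norm_sub_le (hf : TwoJetBoundOn f L s) (hs : Convex ℝ s) {x y : E} (hx : x ∈ s)
    (hy : y ∈ s) : ‖f y - f x‖ ≤ L * ‖y - x‖ :=
  hs.norm_image_sub_le_of_norm_fderiv_le hf.differentiableAt hf.norm_fderiv_le hx hy

theorem norm_sub_sub_fderiv_le (hf : TwoJetBoundOn f L s) (hs : Convex ℝ s) {x y : E}
    (hx : x ∈ s) (hy : y ∈ s) : ‖f y - f x - fderiv ℝ f x (y - x)‖ ≤ L * ‖y - x‖ ^ 2 := by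
  have hsegment := hs.segment_subset hx hy
  have hbound : ∀ z ∈ segment ℝ x y, ‖fderiv ℝ f z - fderiv ℝ f x‖ ≤ L * ‖y - x‖ := fun z hz =>
    (hf.lipschitzOnWith_fderiv.norm_sub_le (hsegment hz) hx).trans
      (by gcongr; exact norm_sub_le_of_mem_segment hz)
  rw [pow_two, ← mul_assoc]
  exact (convex_segment x y).norm_image_sub_le_of_norm_fderiv_le'
    (fun z hz => hf.differentiableAt z (hsegment hz)) hbound
    (left_mem_segment ℝ x y) (right_mem_segment ℝ x y)

end TwoJetBoundOn

theorem exists_twoJetBoundOn_ball {f : E → V} {p : E} (hf : ContDiffAt ℝ 2 f p) :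
    ∃ L : ℝ≥0, ∀ᶠ r in 𝓝 (0:ℝ), TwoJetBoundOn f L (ball p r) := by
  have hf' : ContDiffAt ℝ 1 (fderiv ℝ f) p := hf.fderiv_right (by norm_num)
  obtain ⟨K, t, ht, hK⟩ := hf'.exists_lipschitzOnWith
  obtain ⟨r₀, hr₀, hr⟩ := Metric.eventually_nhds_iff_ball.1
    ((((hf.eventually (by simp)).and
      (hf.continuousAt.norm.eventually (gt_mem_nhds (lt_add_one ‖f p‖)))).and
      (hf'.continuousAt.norm.eventually (gt_mem_nhds (lt_add_one ‖fderiv ℝ f p‖)))).and ht)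
  let L : ℝ≥0 := K + (‖f p‖₊ + 1) + (‖fderiv ℝ f p‖₊ + 1)
  have hL : (L : ℝ) = K + (‖f p‖ + 1) + (‖fderiv ℝ f p‖ + 1) := by simp [L]
  have hf_le : ‖f p‖ + 1 ≤ L := by linarith [K.coe_nonneg, norm_nonneg (fderiv ℝ f p)]
  have hfderiv_le : ‖fderiv ℝ f p‖ + 1 ≤ L := by linarith [K.coe_nonneg, norm_nonneg (f p)]
  have hK_le : K ≤ L := by simp only [L, add_assoc, le_self_add]
  refine ⟨L, ?_⟩
  filter_upwards [gt_mem_nhds hr₀] with r hrr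
  have hr' : ∀ x ∈ ball p r, _ := fun x hx => hr x (ball_subset_ball hrr.le hx)
  exact
  { differentiableAt := fun x hx => (hr' x hx).1.1.1.differentiableAt (by simp)
    norm_le := fun x hx => (hr' x hx).1.1.2.le.trans hf_le
    norm_fderiv_le := fun x hx => (hr' x hx).1.2.le.trans hfderiv_le
    lipschitzOnWith_fderiv := (hK.mono fun x hx => (hr' x hx).2).weaken hK_le }

end TwoJetBound

section LocalSolution

variable {E M : Type*} [NormedAddCommGroup E] [NormedSpace ℝ E] [NormedRing M]
  [NormedAlgebra ℝ M]

/-- `F` has Darboux derivative `η` at `x`, i.e. `dF = F · η` at `x`; for invertible `F x` this says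
`F⁻¹ dF = η`. -/
def HasDarbouxDerivAt (F : E → M) (η : E →L[ℝ] M) (x : E) : Prop :=
  HasFDerivAt F ((ContinuousLinearMap.mul ℝ M (F x)).comp η) x

/-- The Maurer–Cartan equation `dω + ω ∧ ω = 0` at `x` for an algebra-valued one-form `ω`: the
integrability condition of `dF = F · ω`. -/
def MaurerCartanAt (ω : E → E →L[ℝ] M) (x : E) : Prop :=
  ∀ u v, fderiv ℝ ω x u v - fderiv ℝ ω x v u = ω x v * ω x u - ω x u * ω x v

/-- `α` is the solution, starting at `1`, of `dF = F · ω` along the segment from `p` to `p + v`. -/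
structure IsRadialSolution (ω : E → E →L[ℝ] M) (p v : E) (α : ℝ → M) : Prop where
  map_zero : α 0 = 1
  hasDerivWithinAt : ∀ t ∈ Icc (0 : ℝ) 1,
    HasDerivWithinAt α (α t * ω (p + t • v) v) (Icc 0 1) t

variable {ω : E → E →L[ℝ] M} {L : ℝ≥0} {p v h : E} {r : ℝ}

theorem IsRadialSolution.continuousOn {α : ℝ → M} (hα : IsRadialSolution ω p v α) :
    ContinuousOn α (Icc 0 1) :=
  fun t ht => (hα.hasDerivWithinAt t ht).continuousWithinAt

theorem IsRadialSolution.apply_one_of_zero {α : ℝ → M} (hα : IsRadialSolution ω p 0 α) :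
    α 1 = 1 := by
  have hconst := norm_sub_le_of_norm_residual_le (β := fun _ => 1) le_rfl (by simp)
    hα.hasDerivWithinAt (fun t _ => hasDerivWithinAt_const t _ _) (by simp) hα.map_zero
  simpa [sub_eq_zero] using hconst

theorem add_smul_mem_ball (hv : ‖v‖ < r) {t : ℝ} (ht : t ∈ Icc (0 : ℝ) 1) :
    p + t • v ∈ ball p r :=
  (convex_ball p r).add_smul_mem (mem_ball_self ((norm_nonneg v).trans_lt hv))
    (by simpa using hv) ht

theorem norm_apply_radial_le (hω : TwoJetBoundOn ω L (ball p r)) (hLr : L * r ≤ 1 / 2)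
    (hv : ‖v‖ < r) {t : ℝ} (ht : t ∈ Icc (0 : ℝ) 1) : ‖ω (p + t • v) v‖ ≤ 1 / 2 :=
  calc ‖ω (p + t • v) v‖ ≤ L * r :=
        (ω (p + t • v)).le_of_opNorm_le_of_le (hω.norm_le _ (add_smul_mem_ball hv ht)) hv.le
    _ ≤ 1 / 2 := hLr

theorem hasDerivAt_apply_radial (hω : TwoJetBoundOn ω L (ball p r)) (hv : ‖v‖ < r) (u : E) {t : ℝ}
    (ht : t ∈ Icc (0 : ℝ) 1) :
    HasDerivAt (fun s : ℝ => ω (p + s • v) u) (fderiv ℝ ω (p + t • v) v u) t := by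
  have hray : HasDerivAt (fun s : ℝ => p + s • v) v t := by
    simpa using ((hasDerivAt_id t).smul_const v).const_add p
  have hform := (hω.differentiableAt _ (add_smul_mem_ball hv ht)).hasFDerivAt.comp_hasDerivAt t hray
  exact (ContinuousLinearMap.apply ℝ M u).hasFDerivAt.comp_hasDerivAt t hform

theorem exists_isRadialSolution [CompleteSpace M] (hω : TwoJetBoundOn ω L (ball p r))
    (hLr : L * r ≤ 1 / 2) (hv : ‖v‖ < r) : ∃ α, IsRadialSolution ω p v α := by
  obtain ⟨α, hα0, hα⟩ := exists_hasDerivWithinAt_mul_right (1 : M)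
    (fun t ht => (hasDerivAt_apply_radial hω hv v ht).continuousAt.continuousWithinAt)
    (fun t ht => norm_apply_radial_le hω hLr hv ht)
  exact ⟨α, hα0, hα⟩

-- The Maurer–Cartan relation cancels the terms linear in `h`, leaving only quadratic ones.
theorem residual_eq_of_maurerCartan {O W : E →L[ℝ] M} {O' : E →L[ℝ] E →L[ℝ] M}
    (hO : O' h v - O' v h = O v * O h - O h * O v) (a : M) (t : ℝ) :
    a * O v * (1 + t • O h) + a * (O h + t • O' v h) - a * (1 + t • O h) * W (v + h) =
      -(a * (t • O' h h + (W - O - O' (t • h)) (v + h) + t • (O h * ((W - O) (v + h) + O h)))) := by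
  have hswap : O' h v = O' v h + (O v * O h - O h * O v) := by rw [← hO]; abel
  simp only [sub_apply, map_add, map_smul, smul_apply, hswap, smul_add,
    smul_sub, mul_add, add_mul, mul_sub, mul_one, mul_smul_comm, smul_mul_assoc, mul_assoc]
  abel

theorem norm_quadratic_terms_le {O W : E →L[ℝ] M} {O' : E →L[ℝ] E →L[ℝ] M} {t : ℝ} (ht : ‖t‖ ≤ 1)
    (hvh : ‖v + h‖ ≤ 1) (hO : ‖O‖ ≤ L) (hO' : ‖O'‖ ≤ L) (hWO : ‖W - O‖ ≤ L * ‖h‖)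
    (htaylor : ‖W - O - O' (t • h)‖ ≤ L * ‖h‖ ^ 2) :
    ‖t • O' h h + (W - O - O' (t • h)) (v + h) + t • (O h * ((W - O) (v + h) + O h))‖ ≤
      2 * (L + L ^ 2) * ‖h‖ ^ 2 := by
  have hderiv : ‖t • O' h h‖ ≤ L * ‖h‖ ^ 2 :=
    calc ‖t • O' h h‖ ≤ 1 * (L * ‖h‖ * ‖h‖) := by
          rw [norm_smul]; gcongr; exact O'.le_of_opNorm₂_le_of_le hO' le_rfl le_rfl
      _ = L * ‖h‖ ^ 2 := by ring
  have hremainder : ‖(W - O - O' (t • h)) (v + h)‖ ≤ L * ‖h‖ ^ 2 := by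
    simpa using ContinuousLinearMap.le_of_opNorm_le_of_le _ htaylor hvh
  have hincrement : ‖(W - O) (v + h)‖ ≤ L * ‖h‖ := by
    simpa using ContinuousLinearMap.le_of_opNorm_le_of_le _ hWO hvh
  have hproduct : ‖t • (O h * ((W - O) (v + h) + O h))‖ ≤ 2 * L ^ 2 * ‖h‖ ^ 2 := by
    have hOh : ‖O h‖ ≤ L * ‖h‖ := O.le_of_opNorm_le hO h
    calc ‖t • (O h * ((W - O) (v + h) + O h))‖ ≤ 1 * (L * ‖h‖ * (L * ‖h‖ + L * ‖h‖)) := by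
          rw [norm_smul]; gcongr; exact norm_mul_le_of_le hOh (norm_add_le_of_le hincrement hOh)
      _ = 2 * L ^ 2 * ‖h‖ ^ 2 := by ring
  calc _ ≤ L * ‖h‖ ^ 2 + L * ‖h‖ ^ 2 + 2 * L ^ 2 * ‖h‖ ^ 2 :=
        norm_add₃_le.trans (by gcongr)
    _ = 2 * (L + L ^ 2) * ‖h‖ ^ 2 := by ring

theorem norm_residual_le (hω : TwoJetBoundOn ω L (ball p r)) (hr : r ≤ 1)
    (hflat : ∀ y ∈ ball p r, MaurerCartanAt ω y) (hv : ‖v‖ < r) (hvh : ‖v + h‖ < r) {t : ℝ}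
    (ht : t ∈ Icc (0 : ℝ) 1) (a : M) :
    ‖a * ω (p + t • v) v * (1 + t • ω (p + t • v) h) +
        a * (ω (p + t • v) h + t • fderiv ℝ ω (p + t • v) v h) -
      a * (1 + t • ω (p + t • v) h) * ω (p + t • (v + h)) (v + h)‖ ≤
      ‖a‖ * (2 * (L + L ^ 2) * ‖h‖ ^ 2) := by
  have hy := add_smul_mem_ball (p := p) hv ht
  have hz := add_smul_mem_ball (p := p) hvh ht
  have hsub : p + t • (v + h) - (p + t • v) = t • h := by rw [smul_add]; abel
  have ht1 : ‖t‖ ≤ 1 := by rw [Real.norm_of_nonneg ht.1]; exact ht.2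
  have hth : ‖t • h‖ ≤ ‖h‖ := by
    rw [norm_smul]; exact mul_le_of_le_one_left (norm_nonneg h) ht1
  have hfirst := hω.norm_sub_le (convex_ball p r) hy hz
  have hsecond := hω.norm_sub_sub_fderiv_le (convex_ball p r) hy hz
  rw [hsub] at hfirst hsecond
  rw [residual_eq_of_maurerCartan (hflat _ hy h v), norm_neg]
  exact norm_mul_le_of_le le_rfl <| norm_quadratic_terms_le ht1 (hvh.le.trans hr)
    (hω.norm_le _ hy) (hω.norm_fderiv_le _ hy) (hfirst.trans (by gcongr))
    (hsecond.trans (by gcongr))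

-- `α t * (1 + t • ω (p + t • v) h)` solves the equation along the ray to `p + (v + h)` up to
-- `O(‖h‖ ^ 2)`, and Gronwall compares it with the exact solution `β`.
theorem IsRadialSolution.exists_norm_sub_le (hω : TwoJetBoundOn ω L (ball p r)) (hr : r ≤ 1)
    (hLr : L * r ≤ 1 / 2) (hflat : ∀ y ∈ ball p r, MaurerCartanAt ω y) (hv : ‖v‖ < r)
    {α : ℝ → M} (hα : IsRadialSolution ω p v α) :
    ∃ C, ∀ h β, ‖v + h‖ < r → IsRadialSolution ω p (v + h) β →
      ‖β 1 - α 1 * (1 + ω (p + v) h)‖ ≤ C * ‖h‖ ^ 2 := by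
  obtain ⟨A, hA⟩ := isCompact_Icc.exists_bound_of_continuousOn hα.continuousOn
  have hA0 : 0 ≤ A := (norm_nonneg _).trans (hA 0 (by simp))
  refine ⟨2 * (A * (2 * (L + L ^ 2))), fun h β hvh hβ => ?_⟩
  have hderiv : ∀ t ∈ Icc (0 : ℝ) 1, HasDerivWithinAt
      (fun t => α t * (1 + t • ω (p + t • v) h))
      (α t * ω (p + t • v) v * (1 + t • ω (p + t • v) h) +
        α t * (ω (p + t • v) h + t • fderiv ℝ ω (p + t • v) v h)) (Icc 0 1) t := by
    intro t ht
    have hfactor : HasDerivAt (fun t : ℝ => (1 : M) + t • ω (p + t • v) h)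
        (ω (p + t • v) h + t • fderiv ℝ ω (p + t • v) v h) t := by
      simpa [add_comm] using
        ((hasDerivAt_id t).smul (hasDerivAt_apply_radial hω hv h ht)).const_add (1 : M)
    exact (hα.hasDerivWithinAt t ht).mul hfactor.hasDerivWithinAt
  have hcompare := norm_sub_le_of_norm_residual_le
    (ε := A * (2 * (L + L ^ 2) * ‖h‖ ^ 2)) (by positivity)
    (fun t ht => (norm_apply_radial_le hω hLr hvh ht).trans (by norm_num))
    hβ.hasDerivWithinAt hderiv
    (fun t ht => (norm_residual_le hω hr hflat hv hvh ht (α t)).trans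
      (by gcongr; exact hA t ht))
    (by simp [hα.map_zero, hβ.map_zero])
  simpa [mul_assoc] using hcompare

theorem hasDarbouxDerivAt_of_isRadialSolution (hω : TwoJetBoundOn ω L (ball p r)) (hr : r ≤ 1)
    (hLr : L * r ≤ 1 / 2) (hflat : ∀ y ∈ ball p r, MaurerCartanAt ω y) {α : E → ℝ → M}
    (hα : ∀ v, ‖v‖ < r → IsRadialSolution ω p v (α v)) {x : E} (hx : x ∈ ball p r) :
    HasDarbouxDerivAt (fun y => α (y - p) 1) (ω x) x := by
  have hv : ‖x - p‖ < r := mem_ball_iff_norm.1 hx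
  obtain ⟨C, hC⟩ := (hα _ hv).exists_norm_sub_le hω hr hLr hflat hv
  have hO : (fun y => α (y - p) 1 - α (x - p) 1 * (1 + ω x (y - x))) =O[𝓝 x]
      fun y => ‖y - x‖ ^ 2 := by
    refine Asymptotics.IsBigO.of_bound C ?_
    filter_upwards [isOpen_ball.mem_nhds hx] with y hy
    have hyp : x - p + (y - x) = y - p := by abel
    have hyr : ‖y - p‖ < r := mem_ball_iff_norm.1 hy
    have := hC (y - x) (α (y - p)) (by rwa [hyp]) (by rw [hyp]; exact hα _ hyr)
    simpa using this
  have hincrement : HasFDerivAt (fun y => 1 + ω x (y - x)) (ω x) x :=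
    ((ω x).hasFDerivAt.comp x (hasFDerivAt_sub_const x)).const_add 1
  have hlinear : HasFDerivAt (fun y => α (x - p) 1 * (1 + ω x (y - x)))
      ((ContinuousLinearMap.mul ℝ M (α (x - p) 1)).comp (ω x)) x :=
    (ContinuousLinearMap.mul ℝ M (α (x - p) 1)).hasFDerivAt.comp x hincrement
  have hquadratic := hO.hasFDerivAt (𝕜 := ℝ) one_lt_two
  simpa [Pi.add_def, HasDarbouxDerivAt] using hquadratic.add hlinear

theorem exists_hasDarbouxDerivAt [CompleteSpace M] (hω : ContDiffAt ℝ 2 ω p)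
    (hflat : ∀ᶠ y in 𝓝 p, MaurerCartanAt ω y) :
    ∃ Φ : E → M, Φ p = 1 ∧ ∀ᶠ x in 𝓝 p, HasDarbouxDerivAt Φ (ω x) x := by
  obtain ⟨L, hL⟩ := exists_twoJetBoundOn_ball hω
  obtain ⟨r₀, hr₀, hflat⟩ := Metric.eventually_nhds_iff_ball.1 hflat
  have hLr : ∀ᶠ r : ℝ in 𝓝 0, L * r < 1 / 2 :=
    (continuous_const_mul (L : ℝ)).continuousAt.eventually (gt_mem_nhds (by simp))
  obtain ⟨r, ⟨⟨⟨hωr, hLr⟩, hrr₀⟩, hr1⟩, hr0⟩ :=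
    ((((hL.and hLr).and (gt_mem_nhds hr₀)).and (gt_mem_nhds one_pos)).filter_mono
      nhdsWithin_le_nhds |>.and (self_mem_nhdsWithin (s := Ioi (0 : ℝ)))).exists
  choose! α hα using fun v (hv : ‖v‖ < r) => exists_isRadialSolution hωr hLr.le hv
  have hsolution := fun x (hx : x ∈ ball p r) =>
    hasDarbouxDerivAt_of_isRadialSolution hωr hr1.le hLr.le
      (fun y hy => hflat y (ball_subset_ball hrr₀.le hy)) hα hx
  refine ⟨fun y => α (y - p) 1, ?_, eventually_of_mem (ball_mem_nhds p hr0) hsolution⟩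
  simpa using (hα 0 (by simpa using hr0)).apply_one_of_zero

end LocalSolution

section LocalUniqueness

variable {E M : Type*} [NormedAddCommGroup E] [NormedSpace ℝ E] [NormedRing M]
  [NormedAlgebra ℝ M]

theorem HasDarbouxDerivAt.const_mul {F : E → M} {η : E →L[ℝ] M} {x : E}
    (hF : HasDarbouxDerivAt F η x) (c : M) : HasDarbouxDerivAt (fun y => c * F y) η x := by
  have h : HasFDerivAt (fun y => c * F y) _ x :=
    (ContinuousLinearMap.mul ℝ M c).hasFDerivAt.comp x hF
  exact h.congr_fderiv (by ext u; simp [mul_assoc])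

theorem HasDarbouxDerivAt.congr_of_eventuallyEq {F G : E → M} {η : E →L[ℝ] M} {x : E}
    (hF : HasDarbouxDerivAt F η x) (h : G =ᶠ[𝓝 x] F) : HasDarbouxDerivAt G η x := by
  rw [HasDarbouxDerivAt, h.eq_of_nhds]
  exact HasFDerivAt.congr_of_eventuallyEq hF h

theorem HasDarbouxDerivAt.hasFDerivAt_mul_inv [CompleteSpace M] {F G : E → Mˣ} {η : E →L[ℝ] M}
    {x : E} (hF : HasDarbouxDerivAt (fun y => (F y : M)) η x)
    (hG : HasDarbouxDerivAt (fun y => (G y : M)) η x) :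
    HasFDerivAt (fun y => ((F y / G y : Mˣ) : M)) (0 : E →L[ℝ] M) x := by
  have hinv := HasFDerivAt.comp x (g := Ring.inverse) (hasFDerivAt_ringInverse (𝕜 := ℝ) (G x)) hG
  simp only [Function.comp_def, Ring.inverse_unit] at hinv
  simp only [div_eq_mul_inv, Units.val_mul]
  exact (HasFDerivAt.mul' hF hinv).congr_fderiv (by ext u; simp [mul_assoc])

theorem eventually_div_eq_of_hasDarbouxDerivAt [CompleteSpace M] {F G : E → Mˣ}
    {ω : E → E →L[ℝ] M} {x : E}
    (hF : ∀ᶠ y in 𝓝 x, HasDarbouxDerivAt (fun z => (F z : M)) (ω y) y)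
    (hG : ∀ᶠ y in 𝓝 x, HasDarbouxDerivAt (fun z => (G z : M)) (ω y) y) :
    ∀ᶠ y in 𝓝 x, F y / G y = F x / G x := by
  obtain ⟨r, hr, hball⟩ := Metric.eventually_nhds_iff_ball.1 (hF.and hG)
  have hderiv : ∀ y ∈ ball x r, HasFDerivAt (fun z => ((F z / G z : Mˣ) : M)) (0 : E →L[ℝ] M) y :=
    fun y hy => (hball y hy).1.hasFDerivAt_mul_inv (hball y hy).2
  filter_upwards [ball_mem_nhds x hr] with y hy
  exact Units.ext <| isOpen_ball.is_const_of_fderiv_eq_zero (convex_ball x r).isPreconnected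
    (fun z hz => (hderiv z hz).differentiableAt.differentiableWithinAt)
    (fun z hz => (hderiv z hz).fderiv) hy (mem_ball_self hr)

theorem exists_units_hasDarbouxDerivAt [CompleteSpace M] {ω : E → E →L[ℝ] M} {p : E}
    (hω : ContDiffAt ℝ 2 ω p) (hflat : ∀ᶠ y in 𝓝 p, MaurerCartanAt ω y) :
    ∃ Φ : E → Mˣ, ∀ᶠ x in 𝓝 p, HasDarbouxDerivAt (fun y => (Φ y : M)) (ω x) x := by
  classical
  obtain ⟨Φ, hΦp, hΦ⟩ := exists_hasDarbouxDerivAt hω hflat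
  have hunit : ∀ᶠ x in 𝓝 p, IsUnit (Φ x) :=
    hΦ.self_of_nhds.continuousAt.eventually (Units.isOpen.mem_nhds (by simp [hΦp]))
  refine ⟨fun y => if hy : IsUnit (Φ y) then hy.unit else 1, ?_⟩
  filter_upwards [hΦ, hunit.eventually_nhds] with x hx hunitx
  refine hx.congr_of_eventuallyEq ?_
  filter_upwards [hunitx] with y hy
  simp [hy]

end LocalUniqueness

section Monodromy

-- The transition functions define a covering space with discrete fibre `G`; the function `S` is
-- read off from a global section of it.
theorem exists_forall_eventually_div_eq {X G ι : Type*} [TopologicalSpace X]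
    [SimplyConnectedSpace X] [LocallyPathConnectedSpace X] [Group G] {u : ι → Set X}
    (hu : ∀ i, IsOpen (u i)) (hcover : ∀ x, ∃ i, x ∈ u i) {Φ : ι → X → G}
    (hΦ : ∀ i j, ∀ x ∈ u i ∩ u j, ∀ᶠ y in 𝓝 x, Φ i y / Φ j y = Φ i x / Φ j x) :
    ∃ S : X → G, ∀ i, ∀ x ∈ u i, ∀ᶠ y in 𝓝 x, S y / Φ i y = S x / Φ i x := by
  choose idx hidx using hcover
  let _ : TopologicalSpace G := ⊥
  have : DiscreteTopology G := ⟨rfl⟩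
  let Z : FiberBundleCore ι X G :=
    { baseSet := u
      isOpen_baseSet := hu
      indexAt := idx
      mem_baseSet_at := hidx
      coordChange := fun i j x a => a * (Φ i x / Φ j x)
      coordChange_self := by simp
      continuousOn_coordChange := fun i j => by
        have htransition : ContinuousOn (fun x => Φ i x / Φ j x) (u i ∩ u j) := fun x hx =>
          (continuousAt_const.congr (EventuallyEq.symm (hΦ i j x hx))).continuousWithinAt
        exact continuousOn_snd.mul (htransition.comp continuousOn_fst fun y hy => hy.1)
      coordChange_comp := by simp [mul_assoc] }
  have hcovering : IsCoveringMap Z.proj := FiberBundle.isCoveringMap (F := G) (E := Z.Fiber)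
  let x₀ : X := Classical.arbitrary X
  obtain ⟨s, ⟨-, hs⟩, -⟩ := hcovering.existsUnique_continuousMap_lifts
    (ContinuousMap.id X) x₀ ⟨x₀, (1 : G)⟩ rfl
  have hs : ∀ x, (s x).1 = x := congrFun hs
  let c : X → G := fun x => (s x).2
  have hcoord : ∀ i x, (Z.localTriv i (s x)).2 = c x * Φ (idx x) x / Φ i x := fun i x => by
    have : (Z.localTriv i (s x)).2 =
      c x * (Φ (idx (s x).1) (s x).1 / Φ i (s x).1) := rfl
    rw [this, hs, mul_div_assoc]
  refine ⟨fun x => c x * Φ (idx x) x, fun i x hx => ?_⟩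
  have hsource : s x ∈ (Z.localTriv i).source := by
    rwa [FiberBundleCore.mem_localTriv_source, hs]
  have hcont : ContinuousAt (fun y => (Z.localTriv i (s y)).2) x :=
    continuous_snd.continuousAt.comp
      (((Z.localTriv i).continuousAt hsource).comp s.continuous.continuousAt)
  simpa only [hcoord, ContinuousAt, nhds_discrete, tendsto_pure] using hcont

end Monodromy

section GlobalSolution

variable {E M : Type*} [NormedAddCommGroup E] [NormedSpace ℝ E] [NormedRing M]
  [NormedAlgebra ℝ M]

theorem exists_units_forall_hasDarbouxDerivAt [CompleteSpace M] {U : Set E} (hU : IsOpen U)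
    [SimplyConnectedSpace U] {ω : E → E →L[ℝ] M} (hω : ContDiffOn ℝ 2 ω U)
    (hflat : ∀ x ∈ U, MaurerCartanAt ω x) {p : E} (hp : p ∈ U) :
    ∃ F : E → Mˣ, F p = 1 ∧ ∀ x ∈ U, HasDarbouxDerivAt (fun y => (F y : M)) (ω x) x := by
  classical
  have := hU.locallyPathConnectedSpace
  have hlocal := fun x : U => exists_units_hasDarbouxDerivAt (hω.contDiffAt (hU.mem_nhds x.2))
    (eventually_of_mem (hU.mem_nhds x.2) hflat)
  choose Φ hΦ using hlocal
  let u : U → Set U := fun i =>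
    {x | ∀ᶠ y in 𝓝 (x : E), HasDarbouxDerivAt (fun z => (Φ i z : M)) (ω y) y}
  obtain ⟨S, hS⟩ := exists_forall_eventually_div_eq (u := u) (Φ := fun i x => Φ i x)
    (fun i => isOpen_setOfPred_eventually_nhds.preimage continuous_subtype_val)
    (fun x => ⟨x, hΦ x⟩)
    (fun i j x hx => continuous_subtype_val.continuousAt.eventually
      (eventually_div_eq_of_hasDarbouxDerivAt hx.1 hx.2))
  let c : Mˣ := (S ⟨p, hp⟩)⁻¹
  refine ⟨fun x => if hx : x ∈ U then c * S ⟨x, hx⟩ else 1, by simp [hp, c], fun x hx => ?_⟩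
  have hSx := hS ⟨x, hx⟩ ⟨x, hx⟩ (hΦ ⟨x, hx⟩)
  rw [nhds_subtype_eq_comap, eventually_comap] at hSx
  refine ((hΦ ⟨x, hx⟩).self_of_nhds.const_mul
    ((c * (S ⟨x, hx⟩ / Φ ⟨x, hx⟩ x) : Mˣ) : M)).congr_of_eventuallyEq ?_
  filter_upwards [hSx, hU.mem_nhds hx] with y hy hyU
  simp [hyU, ← hy ⟨y, hyU⟩ rfl, mul_assoc, ← Units.val_mul]

end GlobalSolution

section Regularity

variable {E M : Type*} [NormedAddCommGroup E] [NormedSpace ℝ E] [NormedRing M]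
  [NormedAlgebra ℝ M] {U : Set E} {ω : E → E →L[ℝ] M} {F : E → M}

theorem contDiffOn_of_hasDarbouxDerivAt (hU : IsOpen U) {n : ℕ∞} (hω : ContDiffOn ℝ n ω U)
    (hF : ∀ x ∈ U, HasDarbouxDerivAt F (ω x) x) : ContDiffOn ℝ n F U := by
  have hdiff : DifferentiableOn ℝ F U :=
    fun x hx => HasFDerivAt.differentiableAt (hF x hx) |>.differentiableWithinAt
  refine contDiffOn_iff_forall_nat_le.2 fun k => ?_
  induction k with
  | zero => exact fun _ => contDiffOn_zero.2 hdiff.continuousOn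
  | succ k ih =>
    intro hk
    have hkn : (k : ℕ∞) ≤ n := le_trans (by simp) hk
    have hderiv : ContDiffOn ℝ k (fun x => (ContinuousLinearMap.mul ℝ M (F x)).comp (ω x)) U :=
      ((ContinuousLinearMap.mul ℝ M).contDiff.comp_contDiffOn (ih hkn)).clm_comp
        (hω.of_le (mod_cast hkn))
    push_cast
    exact (contDiffOn_succ_iff_fderiv_of_isOpen hU).2
      ⟨hdiff, by simp, hderiv.congr fun x hx => HasFDerivAt.fderiv (hF x hx)⟩

theorem mem_unitary_of_hasDarbouxDerivAt [StarRing M] [ContinuousStar M] [StarModule ℝ M]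
    (hU : IsOpen U) (hconn : IsPreconnected U) {F : E → Mˣ}
    (hF : ∀ x ∈ U, HasDarbouxDerivAt (fun y => (F y : M)) (ω x) x)
    (hskew : ∀ x ∈ U, ∀ u, ω x u ∈ skewAdjoint M) {p x : E} (hp : p ∈ U) (hFp : F p = 1)
    (hx : x ∈ U) : (F x : M) ∈ unitary M := by
  have hderiv : ∀ y ∈ U, HasFDerivAt (fun z => (F z : M) * star (F z : M)) (0 : E →L[ℝ] M) y := by
    intro y hy
    refine (HasFDerivAt.mul' (hF y hy) (HasFDerivAt.star (hF y hy))).congr_fderiv ?_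
    ext u
    simp [skewAdjoint.mem_iff.1 (hskew y hy u), mul_assoc]
  have hconst : (F x : M) * star (F x : M) = 1 := by
    simpa [hFp] using hU.is_const_of_fderiv_eq_zero hconn
      (fun y hy => (hderiv y hy).differentiableAt.differentiableWithinAt)
      (fun y hy => (hderiv y hy).fderiv) hx hp
  refine Unitary.mem_iff.2 ⟨?_, hconst⟩
  rw [← Units.mul_eq_one_iff_inv_eq.1 hconst, Units.inv_mul]

end Regularity

section Coordinates

variable {ι M : Type*} [NormedRing M] [NormedAlgebra ℝ M]

theorem maurerCartanAt_of_basis {E : Type*} [NormedAddCommGroup E] [NormedSpace ℝ E]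
    {ω : E → E →L[ℝ] M} {x : E} (b : Module.Basis ι ℝ E)
    (h : ∀ i j, fderiv ℝ ω x (b i) (b j) - fderiv ℝ ω x (b j) (b i) =
      ω x (b j) * ω x (b i) - ω x (b i) * ω x (b j)) : MaurerCartanAt ω x := by
  let W : E →L[ℝ] E →L[ℝ] M := (ContinuousLinearMap.mul ℝ M).bilinearComp (ω x) (ω x)
  have hcurl : fderiv ℝ ω x - (fderiv ℝ ω x).flip = W.flip - W :=
    ContinuousLinearMap.coe_injective <| b.ext fun i =>
      ContinuousLinearMap.coe_injective <| b.ext fun j => by simpa [W] using h i j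
  intro u v
  simpa [W] using congr($hcurl u v)

variable [Fintype ι]

/-- The one-form `∑ₖ Aₖ dxₖ` on `ι → ℝ` with coefficient functions `Aₖ`. -/
def coordForm (A : ι → (ι → ℝ) → M) (q : ι → ℝ) : (ι → ℝ) →L[ℝ] M :=
  ∑ k, (ContinuousLinearMap.proj k).smulRight (A k q)

variable {A : ι → (ι → ℝ) → M} {U : Set (ι → ℝ)} {q : ι → ℝ}

theorem coordForm_apply (u : ι → ℝ) : coordForm A q u = ∑ k, u k • A k q := by
  simp [coordForm]

theorem coordForm_single [DecidableEq ι] (k : ι) : coordForm A q (Pi.single k 1) = A k q := by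
  simp [coordForm_apply, Pi.single_apply]

theorem contDiffOn_coordForm {n : WithTop ℕ∞} (hA : ∀ k, ContDiffOn ℝ n (A k) U) :
    ContDiffOn ℝ n (coordForm A) U :=
  ContDiffOn.sum fun k _ => (ContinuousLinearMap.smulRightL ℝ (ι → ℝ) M
    (ContinuousLinearMap.proj k)).contDiff.comp_contDiffOn (hA k)

theorem fderiv_coordForm_single [DecidableEq ι] (hA : ∀ k, DifferentiableAt ℝ (A k) q)
    (u : ι → ℝ) (k : ι) : fderiv ℝ (coordForm A) q u (Pi.single k 1) = fderiv ℝ (A k) q u := by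
  have hform : DifferentiableAt ℝ (coordForm A) q := .fun_sum fun k _ =>
    (ContinuousLinearMap.smulRightL ℝ (ι → ℝ) M
      (ContinuousLinearMap.proj k)).differentiableAt.comp q (hA k)
  have hcoeff := (ContinuousLinearMap.apply ℝ M (Pi.single k 1)).hasFDerivAt.comp q
    hform.hasFDerivAt
  simp only [Function.comp_def, ContinuousLinearMap.apply_apply, coordForm_single] at hcoeff
  simp [hcoeff.fderiv]

theorem maurerCartanAt_coordForm [DecidableEq ι] (hA : ∀ k, DifferentiableAt ℝ (A k) q)
    (hflat : ∀ k l, fderiv ℝ (A l) q (Pi.single k 1) - fderiv ℝ (A k) q (Pi.single l 1) =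
      A l q * A k q - A k q * A l q) : MaurerCartanAt (coordForm A) q :=
  maurerCartanAt_of_basis (Pi.basisFun ℝ ι) fun k l => by
    simpa [fderiv_coordForm_single hA, coordForm_single] using hflat k l

end Coordinates

section OrthogonalFrame

open scoped Matrix.Norms.L2Operator

theorem contDiffOn_matrix {E l n : Type*} [NormedAddCommGroup E] [NormedSpace ℝ E] [Fintype l]
    [Fintype n] [DecidableEq n] {A : E → Matrix l n ℝ} {U : Set E} {r : WithTop ℕ∞} :
    ContDiffOn ℝ r A U ↔ ∀ i j, ContDiffOn ℝ r (fun q => A q i j) U := by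
  classical
  refine ⟨fun hA i j =>
    (Matrix.entryLinearMap ℝ ℝ i j).toContinuousLinearMap.contDiff.comp_contDiffOn hA,
    fun hA => ?_⟩
  exact (Matrix.ofLinearEquiv ℝ).toContinuousLinearEquiv.contDiff.comp_contDiffOn
    (contDiffOn_pi.2 fun i => contDiffOn_pi.2 (hA i))

variable {m N : ℕ} {U : Set (Fin m → ℝ)}

theorem pdM_eq_fderiv {A : (Fin m → ℝ) → Matrix (Fin N) (Fin N) ℝ} {q : Fin m → ℝ}
    (hA : DifferentiableAt ℝ A q) (k : Fin m) : pdM k A q = fderiv ℝ A q (Pi.single k 1) := by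
  ext i j
  exact congr($(((Matrix.entryLinearMap ℝ ℝ i j).toContinuousLinearMap.hasFDerivAt.comp q
    hA.hasFDerivAt).fderiv) (Pi.single k 1))

theorem det_eq_one_of_mem_orthogonalGroup {X n : Type*} [TopologicalSpace X] [Fintype n]
    [DecidableEq n] {F : X → Matrix n n ℝ} {U : Set X} (hU : IsPreconnected U)
    (hcont : ContinuousOn F U) (hF : ∀ x ∈ U, F x ∈ Matrix.orthogonalGroup n ℝ) {p x : X}
    (hp : p ∈ U) (hFp : F p = 1) (hx : x ∈ U) : (F x).det = 1 := by
  have hsq : EqOn ((fun x => (F x).det) ^ 2) ((fun _ => (1 : ℝ)) ^ 2) U := fun y hy => by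
    simpa [sq] using congr(Matrix.det $((Matrix.mem_orthogonalGroup_iff n ℝ).1 (hF y hy)))
  exact hU.eq_of_sq_eq (continuous_id.matrix_det.comp_continuousOn hcont) continuousOn_const hsq
    (fun _ => one_ne_zero) hp (by simp [hFp]) hx

theorem exists_orthogonal_frame (hU : IsOpen U) [SimplyConnectedSpace U]
    {A : Fin m → (Fin m → ℝ) → Matrix (Fin N) (Fin N) ℝ}
    (hA : ∀ k i j, ContDiffOn ℝ (⊤ : ℕ∞) (fun q => A k q i j) U)
    (hskew : ∀ k, ∀ q ∈ U, (A k q)ᵀ = -A k q)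
    (hflat : ∀ k l, ∀ q ∈ U, pdM k (A l) q - pdM l (A k) q = A l q * A k q - A k q * A l q) :
    ∃ F : (Fin m → ℝ) → Matrix (Fin N) (Fin N) ℝ,
      (∀ i j, ContDiffOn ℝ (⊤ : ℕ∞) (fun q => F q i j) U) ∧
      (∀ q ∈ U, (F q)ᵀ * F q = 1 ∧ (F q).det = 1) ∧
      (∀ k, ∀ q ∈ U, pdM k F q = F q * A k q) := by
  have hconn : IsPreconnected U := isPreconnected_iff_preconnectedSpace.2 inferInstance
  obtain ⟨p, hp⟩ : U.Nonempty := nonempty_coe_sort.1 inferInstance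
  have hA' : ∀ k, ContDiffOn ℝ (⊤ : ℕ∞) (A k) U := fun k => contDiffOn_matrix.2 (hA k)
  have hdiff : ∀ q ∈ U, ∀ k, DifferentiableAt ℝ (A k) q := fun q hq k =>
    ((hA' k).differentiableOn (by simp)).differentiableAt (hU.mem_nhds hq)
  have hω : ContDiffOn ℝ (⊤ : ℕ∞) (coordForm A) U := contDiffOn_coordForm hA'
  obtain ⟨F, hFp, hF⟩ := exists_units_forall_hasDarbouxDerivAt hU
    (hω.of_le (WithTop.coe_le_coe.2 le_top))
    (fun q hq => maurerCartanAt_coordForm (hdiff q hq) fun k l => by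
      simpa only [pdM_eq_fderiv (hdiff q hq _)] using hflat k l q hq) hp
  have hFsmooth := contDiffOn_of_hasDarbouxDerivAt hU hω hF
  have horth : ∀ q ∈ U, (F q : Matrix (Fin N) (Fin N) ℝ) ∈ Matrix.orthogonalGroup (Fin N) ℝ :=
    fun q hq => mem_unitary_of_hasDarbouxDerivAt hU hconn hF
      (fun y hy u => by
        rw [coordForm_apply]
        exact sum_mem fun k _ => skewAdjoint.smul_mem _ <|
          skewAdjoint.mem_iff.2 ((Matrix.star_eq_conjTranspose _).trans (hskew k y hy))) hp hFp hq
  refine ⟨fun q => F q, contDiffOn_matrix.1 hFsmooth, fun q hq =>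
    ⟨(Matrix.mem_orthogonalGroup_iff' (Fin N) ℝ).1 (horth q hq),
      det_eq_one_of_mem_orthogonalGroup hconn hFsmooth.continuousOn horth hp (by simp [hFp]) hq⟩,
    fun k q hq => ?_⟩
  have hFq : HasFDerivAt _ _ q := hF q hq
  rw [pdM_eq_fderiv hFq.differentiableAt, hFq.fderiv]
  simp [coordForm_single]

end OrthogonalFrame

section FrameColumns

variable {m N : ℕ}

theorem pd_apply {f : (Fin m → ℝ) → Fin N → ℝ} {q : Fin m → ℝ} (hf : DifferentiableAt ℝ f q)
    (k : Fin m) (a : Fin N) : pd k f q a = pdr k (fun x => f x a) q := by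
  simp [pd, pdr, fderiv_apply hf]

theorem pd_col {F : (Fin m → ℝ) → Matrix (Fin N) (Fin N) ℝ} {q : Fin m → ℝ} {j : Fin N}
    (hF : ∀ i, DifferentiableAt ℝ (fun x => F x i j) q) (k : Fin m) :
    pd k (fun x => (F x).col j) q = (pdM k F q).col j :=
  funext fun i => pd_apply (differentiableAt_pi.2 hF) k i

theorem col_mul_dotProduct_col_mul {n : Type*} [Fintype n] [DecidableEq n] {F : Matrix n n ℝ}
    (hF : Fᵀ * F = 1) (A B : Matrix n n ℝ) (i j : n) :
    (F * A).col i ⬝ᵥ (F * B).col j = (Aᵀ * B) i j :=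
  calc (F * A).col i ⬝ᵥ (F * B).col j = ((F * A)ᵀ * (F * B)) i j := rfl
    _ = (Aᵀ * B) i j := by
      rw [Matrix.transpose_mul, Matrix.mul_assoc, ← Matrix.mul_assoc Fᵀ, hF, Matrix.one_mul]

theorem col_dotProduct_col {n : Type*} [Fintype n] [DecidableEq n] {F : Matrix n n ℝ}
    (hF : Fᵀ * F = 1) (i j : n) : F.col i ⬝ᵥ F.col j = (1 : Matrix n n ℝ) i j :=
  congr($hF i j)

end FrameColumns

section BlockMatrix

variable {m : ℕ}

/-- The index `1 + a` of the middle block `{1, …, m}` of `{0, 1, …, m, m + 1}`. -/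
def midIdx (a : Fin m) : Fin (m + 2) := a.castSucc.succ

theorem sum_eq_zero_add_sum_midIdx_add_last {M : Type*} [AddCommMonoid M] (f : Fin (m + 2) → M) :
    ∑ i, f i = f 0 + ∑ a, f (midIdx a) + f (Fin.last (m + 1)) := by
  rw [Fin.sum_univ_succ, Fin.sum_univ_castSucc, ← add_assoc]
  rfl

theorem eq_zero_or_midIdx_or_last (i : Fin (m + 2)) :
    i = 0 ∨ (∃ a, i = midIdx a) ∨ i = Fin.last (m + 1) := by
  induction i using Fin.cases with
  | zero => simp
  | succ i =>
    induction i using Fin.lastCases with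
    | last => simp
    | cast a => exact .inr (.inl ⟨a, rfl⟩)

section Entries

variable (P : Matrix (Fin m) (Fin m) ℝ) (g h : Fin m → ℝ)

@[simp]
theorem tildeA_zero_zero : tildeA P g h 0 0 = 0 := by simp [tildeA]

@[simp]
theorem tildeA_zero_mid (a : Fin m) : tildeA P g h 0 (midIdx a) = -g a := by
  simp [tildeA, midIdx, Nat.add_one_le_iff]

@[simp]
theorem tildeA_zero_last : tildeA P g h 0 (Fin.last (m + 1)) = 0 := by simp [tildeA]

@[simp]
theorem tildeA_mid_zero (a : Fin m) : tildeA P g h (midIdx a) 0 = g a := by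
  simp [tildeA, midIdx, a.isLt.ne]

@[simp]
theorem tildeA_mid_mid (a b : Fin m) : tildeA P g h (midIdx a) (midIdx b) = P a b := by
  simp [tildeA, midIdx, a.isLt.ne, b.isLt.ne]

@[simp]
theorem tildeA_mid_last (a : Fin m) : tildeA P g h (midIdx a) (Fin.last (m + 1)) = -h a := by
  simp [tildeA, midIdx, a.isLt.ne]

@[simp]
theorem tildeA_last_zero : tildeA P g h (Fin.last (m + 1)) 0 = 0 := by simp [tildeA]

@[simp]
theorem tildeA_last_mid (a : Fin m) : tildeA P g h (Fin.last (m + 1)) (midIdx a) = h a := by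
  simp [tildeA, midIdx, Nat.add_one_le_iff]

@[simp]
theorem tildeA_last_last : tildeA P g h (Fin.last (m + 1)) (Fin.last (m + 1)) = 0 := by
  simp [tildeA]

end Entries

theorem tildeA_sub (P P' : Matrix (Fin m) (Fin m) ℝ) (g g' h h' : Fin m → ℝ) :
    tildeA P g h - tildeA P' g' h' = tildeA (P - P') (g - g') (h - h') := by
  ext i j
  rcases eq_zero_or_midIdx_or_last i with rfl | ⟨a, rfl⟩ | rfl <;>
    rcases eq_zero_or_midIdx_or_last j with rfl | ⟨b, rfl⟩ | rfl <;> simp [sub_eq_add_neg, add_comm]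

theorem transpose_tildeA (P : Matrix (Fin m) (Fin m) ℝ) (g h : Fin m → ℝ) :
    (tildeA P g h)ᵀ = -tildeA (-Pᵀ) g h := by
  ext i j
  rcases eq_zero_or_midIdx_or_last i with rfl | ⟨a, rfl⟩ | rfl <;>
    rcases eq_zero_or_midIdx_or_last j with rfl | ⟨b, rfl⟩ | rfl <;> simp

theorem vecMul_of_transpose_eq_neg {n : Type*} [Fintype n] {P : Matrix n n ℝ} (hP : Pᵀ = -P)
    (v : n → ℝ) : v ᵥ* P = -(P *ᵥ v) := by
  rw [← Matrix.mulVec_transpose, hP, Matrix.neg_mulVec]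

theorem tildeA_commutator {P P' : Matrix (Fin m) (Fin m) ℝ} {g g' h h' : Fin m → ℝ}
    (hP : Pᵀ = -P) (hP' : P'ᵀ = -P') (hcompat : g ⬝ᵥ h' = g' ⬝ᵥ h) :
    tildeA P' g' h' * tildeA P g h - tildeA P g h * tildeA P' g' h' =
      tildeA (P' * P - P * P' + (Matrix.vecMulVec g g' - Matrix.vecMulVec g' g) +
        (Matrix.vecMulVec h h' - Matrix.vecMulVec h' h)) (P' *ᵥ g - P *ᵥ g')
        (P' *ᵥ h - P *ᵥ h') := by
  have hrow : ∀ {Q : Matrix (Fin m) (Fin m) ℝ}, Qᵀ = -Q → ∀ (v : Fin m → ℝ) b,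
      ∑ a, v a * Q a b = -∑ a, Q b a * v a := fun hQ v b =>
    congrFun (vecMul_of_transpose_eq_neg hQ v) b
  have hgh : ∑ a, g a * h' a = ∑ a, g' a * h a := hcompat
  have hhg : ∑ a, h a * g' a = ∑ a, h' a * g a := by simpa only [mul_comm] using hgh.symm
  have hgg : ∑ a, g a * g' a = ∑ a, g' a * g a := by simp only [mul_comm]
  have hhh : ∑ a, h a * h' a = ∑ a, h' a * h a := by simp only [mul_comm]
  ext i j
  rw [Matrix.sub_apply, Matrix.mul_apply, Matrix.mul_apply, sum_eq_zero_add_sum_midIdx_add_last,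
    sum_eq_zero_add_sum_midIdx_add_last]
  rcases eq_zero_or_midIdx_or_last i with rfl | ⟨a, rfl⟩ | rfl <;>
    rcases eq_zero_or_midIdx_or_last j with rfl | ⟨b, rfl⟩ | rfl <;>
    simp only [hrow hP, hrow hP', hgh, hhg, hgg, hhh, Matrix.mulVec, dotProduct,
      Matrix.vecMulVec_apply, Matrix.mul_apply, Matrix.add_apply, Matrix.sub_apply, Pi.sub_apply,
      tildeA_zero_zero, tildeA_zero_mid, tildeA_zero_last, tildeA_mid_zero, tildeA_mid_mid,
      tildeA_mid_last, tildeA_last_zero, tildeA_last_mid, tildeA_last_last, neg_mul, mul_neg,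
      Finset.sum_neg_distrib] <;> ring

theorem pdM_tildeA {P : (Fin m → ℝ) → Matrix (Fin m) (Fin m) ℝ} {g h : (Fin m → ℝ) → Fin m → ℝ}
    {q : Fin m → ℝ} (hg : DifferentiableAt ℝ g q) (hh : DifferentiableAt ℝ h q) (k : Fin m) :
    pdM k (fun x => tildeA (P x) (g x) (h x)) q = tildeA (pdM k P q) (pd k g q) (pd k h q) := by
  ext i j
  rcases eq_zero_or_midIdx_or_last i with rfl | ⟨a, rfl⟩ | rfl <;>
    rcases eq_zero_or_midIdx_or_last j with rfl | ⟨b, rfl⟩ | rfl <;>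
    simp [pdM, pd_apply, hg, hh, pdr, fderiv_fun_neg]

theorem pdM_tildeA_sub_pdM_tildeA {P P' : (Fin m → ℝ) → Matrix (Fin m) (Fin m) ℝ}
    {g g' h h' : (Fin m → ℝ) → Fin m → ℝ} {q : Fin m → ℝ} {k l : Fin m}
    (hg : DifferentiableAt ℝ g q) (hg' : DifferentiableAt ℝ g' q)
    (hh : DifferentiableAt ℝ h q) (hh' : DifferentiableAt ℝ h' q)
    (hskew : (P q)ᵀ = -P q) (hskew' : (P' q)ᵀ = -P' q)
    (hcodazzi_g : pd k g' q - pd l g q = P' q *ᵥ g q - P q *ᵥ g' q)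
    (hcodazzi_h : pd k h' q - pd l h q = P' q *ᵥ h q - P q *ᵥ h' q)
    (hcompat : g q ⬝ᵥ h' q = g' q ⬝ᵥ h q)
    (hgauss : pdM k P' q - pdM l P q = P' q * P q - P q * P' q +
      (Matrix.vecMulVec (g q) (g' q) - Matrix.vecMulVec (g' q) (g q)) +
      (Matrix.vecMulVec (h q) (h' q) - Matrix.vecMulVec (h' q) (h q))) :
    pdM k (fun x => tildeA (P' x) (g' x) (h' x)) q - pdM l (fun x => tildeA (P x) (g x) (h x)) q =
      tildeA (P' q) (g' q) (h' q) * tildeA (P q) (g q) (h q) -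
        tildeA (P q) (g q) (h q) * tildeA (P' q) (g' q) (h' q) := by
  rw [pdM_tildeA hg' hh', pdM_tildeA hg hh, tildeA_sub, hgauss, hcodazzi_g, hcodazzi_h,
    tildeA_commutator hskew hskew' hcompat]

theorem contDiffOn_tildeA {E : Type*} [NormedAddCommGroup E] [NormedSpace ℝ E] {U : Set E}
    {n : WithTop ℕ∞} {P : E → Matrix (Fin m) (Fin m) ℝ} {g h : E → Fin m → ℝ}
    (hP : ∀ i j, ContDiffOn ℝ n (fun x => P x i j) U) (hg : ContDiffOn ℝ n g U)
    (hh : ContDiffOn ℝ n h U) (i j : Fin (m + 2)) :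
    ContDiffOn ℝ n (fun x => tildeA (P x) (g x) (h x) i j) U := by
  rw [contDiffOn_pi] at hg hh
  rcases eq_zero_or_midIdx_or_last i with rfl | ⟨a, rfl⟩ | rfl <;>
    rcases eq_zero_or_midIdx_or_last j with rfl | ⟨b, rfl⟩ | rfl <;>
    simp [contDiffOn_const, hP, hg, hh, ContDiffOn.neg]

@[simp]
theorem transpose_tildeA_mul_tildeA_zero_zero (P P' : Matrix (Fin m) (Fin m) ℝ)
    (g g' h h' : Fin m → ℝ) : ((tildeA P g h)ᵀ * tildeA P' g' h') 0 0 = g ⬝ᵥ g' := by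
  simp [Matrix.mul_apply, sum_eq_zero_add_sum_midIdx_add_last, dotProduct]

@[simp]
theorem transpose_tildeA_mul_tildeA_zero_last (P P' : Matrix (Fin m) (Fin m) ℝ)
    (g g' h h' : Fin m → ℝ) :
    ((tildeA P g h)ᵀ * tildeA P' g' h') 0 (Fin.last (m + 1)) = -(g ⬝ᵥ h') := by
  simp [Matrix.mul_apply, sum_eq_zero_add_sum_midIdx_add_last, dotProduct]

@[simp]
theorem transpose_tildeA_mul_tildeA_last_last (P P' : Matrix (Fin m) (Fin m) ℝ)
    (g g' h h' : Fin m → ℝ) :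
    ((tildeA P g h)ᵀ * tildeA P' g' h') (Fin.last (m + 1)) (Fin.last (m + 1)) = h ⬝ᵥ h' := by
  simp [Matrix.mul_apply, sum_eq_zero_add_sum_midIdx_add_last, dotProduct]

end BlockMatrix

/-- Realization of frontal bundles in the spherical case `c = 1`:
a frontal bundle over a simply connected domain, given in an adapted orthonormal frame by
connection matrices `P_k` and homomorphism components `g_k, h_k` satisfying the coherence,
compatibility and Gauss (`c = 1`) equations, is realized by a frontal `(f, ν)` in
`S^{m+1} ⊂ ℝ^{m+2}`, where `f` is column `0` and `ν` is column `m+1` of the adapted frame. -/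
theorem realization_frontal_bundle_sphere {m : ℕ}
    (U : Set (Fin m → ℝ)) (hU : IsOpen U)
    (hconn : IsConnected U) (hsc : SimplyConnectedSpace U)
    (P : Fin m → (Fin m → ℝ) → Matrix (Fin m) (Fin m) ℝ)
    (g h : Fin m → (Fin m → ℝ) → (Fin m → ℝ))
    (hP : ∀ k i j, ContDiffOn ℝ (⊤ : ℕ∞) (fun q => P k q i j) U)
    (hg : ∀ k, ContDiffOn ℝ (⊤ : ℕ∞) (g k) U) (hh : ∀ k, ContDiffOn ℝ (⊤ : ℕ∞) (h k) U)
    (hskew : ∀ k, ∀ q ∈ U, (P k q)ᵀ = -(P k q))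
    (hcodazzig : ∀ k l, ∀ q ∈ U,
      pd k (g l) q - pd l (g k) q = P l q *ᵥ g k q - P k q *ᵥ g l q)
    (hcodazzih : ∀ k l, ∀ q ∈ U,
      pd k (h l) q - pd l (h k) q = P l q *ᵥ h k q - P k q *ᵥ h l q)
    (hcompat : ∀ k l, ∀ q ∈ U, g k q ⬝ᵥ h l q = g l q ⬝ᵥ h k q)
    (hgauss : ∀ k l, ∀ q ∈ U,
      pdM k (P l) q - pdM l (P k) q
        = P l q * P k q - P k q * P l q
          + (Matrix.vecMulVec (g k q) (g l q) - Matrix.vecMulVec (g l q) (g k q))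
          + (Matrix.vecMulVec (h k q) (h l q) - Matrix.vecMulVec (h l q) (h k q))) :
    ∃ F : (Fin m → ℝ) → Matrix (Fin (m + 2)) (Fin (m + 2)) ℝ,
      (∀ i j, ContDiffOn ℝ (⊤ : ℕ∞) (fun q => F q i j) U) ∧
      (∀ q ∈ U, (F q)ᵀ * F q = 1 ∧ (F q).det = 1) ∧
      (∀ k, ∀ q ∈ U, pdM k F q = F q * tildeA (P k q) (g k q) (h k q)) ∧
      (∀ f ν : (Fin m → ℝ) → (Fin (m + 2) → ℝ),
        (∀ q, f q = fun i => F q i 0) →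
        (∀ q, ν q = fun i => F q i (Fin.last (m + 1))) →
        (∀ q ∈ U, f q ⬝ᵥ f q = 1 ∧ ν q ⬝ᵥ ν q = 1 ∧ f q ⬝ᵥ ν q = 0) ∧
        (∀ k, ∀ q ∈ U, pd k f q ⬝ᵥ ν q = 0) ∧
        (∀ k l, ∀ q ∈ U, pd k f q ⬝ᵥ pd l f q = g k q ⬝ᵥ g l q) ∧
        (∀ k l, ∀ q ∈ U, pd k f q ⬝ᵥ pd l ν q = -(g k q ⬝ᵥ h l q)) ∧
        (∀ k l, ∀ q ∈ U, pd k ν q ⬝ᵥ pd l ν q = h k q ⬝ᵥ h l q)) := by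
  have hdiff := fun {v : _ → Fin m → ℝ} (hv : ContDiffOn ℝ (⊤ : ℕ∞) v U) {q} (hq : q ∈ U) =>
    (hv.differentiableOn (by simp)).differentiableAt (hU.mem_nhds hq)
  obtain ⟨F, hF, hrot, hframe⟩ := exists_orthogonal_frame hU
    (A := fun k q => tildeA (P k q) (g k q) (h k q))
    (fun k => contDiffOn_tildeA (hP k) (hg k) (hh k))
    (fun k q hq => by rw [transpose_tildeA, hskew k q hq, neg_neg])
    (fun k l q hq => pdM_tildeA_sub_pdM_tildeA (hdiff (hg k) hq) (hdiff (hg l) hq)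
      (hdiff (hh k) hq) (hdiff (hh l) hq) (hskew k q hq) (hskew l q hq)
      (hcodazzig k l q hq) (hcodazzih k l q hq) (hcompat k l q hq) (hgauss k l q hq))
  refine ⟨F, hF, hrot, hframe, fun f ν hf hν => ?_⟩
  obtain rfl : f = fun q => (F q).col 0 := funext hf
  obtain rfl : ν = fun q => (F q).col (Fin.last (m + 1)) := funext hν
  have hpd : ∀ j k, ∀ q ∈ U, pd k (fun q => (F q).col j) q =
      (F q * tildeA (P k q) (g k q) (h k q)).col j := fun j k q hq => by
    rw [pd_col (fun i => ((hF i j).differentiableOn (by simp)).differentiableAt (hU.mem_nhds hq)),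
      hframe k q hq]
  refine ⟨fun q hq => ?_, fun k q hq => ?_, fun k l q hq => ?_, fun k l q hq => ?_,
    fun k l q hq => ?_⟩
  · simp [col_dotProduct_col (hrot q hq).1, Fin.ext_iff]
  · simpa [hpd 0 k q hq] using col_mul_dotProduct_col_mul (hrot q hq).1
      (tildeA (P k q) (g k q) (h k q)) 1 0 (Fin.last (m + 1))
  all_goals
    rw [hpd _ k q hq, hpd _ l q hq, col_mul_dotProduct_col_mul (hrot q hq).1]
    simp
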